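/- Let p be an odd prime, G a group, and T a G-module that is finite free as a ℤ_p-module, such that H¹(G, T) is a finitely generated ℤ_p-module. Let N ⊆ H¹(G, T) be a saturated ℤ_p-submodule (i.e. N is the preimage of a ℚ_p-subspace under H¹(G,T) → H¹(G,T) ⊗_{ℤ_p} ℚ_p) whose image in H¹(G,T) ⊗_{ℤ_p} ℚ_p has dimension at least r. Then for every integer n ≥ 1, the image of N under the natural map H¹(G, T) → H¹(G, T/pⁿT) contains a free ℤ/pⁿ-submodule of rank r. -/

import Mathlib

open TensorProduct

section GroupCohomologyOne

variable {R : Type*} [CommRing R] {G : Type*} [Group G]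

/-- The `R`-module of 1-cocycles of `G` valued in `M`, for an action of `G` on `M` given by
`act : G → Module.End R M`. -/
def cocycles {M : Type*} [AddCommGroup M] [Module R M] (act : G → Module.End R M) :
    Submodule R (G → M) where
  carrier := {c | ∀ g h : G, c (g * h) = c g + act g (c h)}
  add_mem' := by
    intro a b ha hb g h
    simp only [Pi.add_apply, ha g h, hb g h, map_add]
    abel
  zero_mem' := by intro g h; simp
  smul_mem' := by
    intro r c hc g h
    simp only [Pi.smul_apply, hc g h, map_smul, smul_add]

/-- The coboundary map `M → (G → M)`, `x ↦ (g ↦ g•x − x)`. -/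
def dZero {M : Type*} [AddCommGroup M] [Module R M] (act : G → Module.End R M) :
    M →ₗ[R] (G → M) where
  toFun x g := act g x - x
  map_add' x y := by
    funext g
    simp only [map_add, Pi.add_apply]
    abel
  map_smul' r x := by
    funext g
    simp [map_smul, smul_sub]

/-- First group cohomology `H¹(G, M)`: 1-cocycles modulo 1-coboundaries. -/
abbrev H1 {M : Type*} [AddCommGroup M] [Module R M] (act : G → Module.End R M) :=
  cocycles act ⧸ (Submodule.comap (cocycles act).subtype (LinearMap.range (dZero act)))

/-- Functoriality of 1-cocycles along an equivariant map. -/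
def cocyclesMap {M M' : Type*} [AddCommGroup M] [Module R M] [AddCommGroup M'] [Module R M']
    (act : G → Module.End R M) (act' : G → Module.End R M') (f : M →ₗ[R] M')
    (hf : ∀ g : G, f ∘ₗ (act g : M →ₗ[R] M) = (act' g : M' →ₗ[R] M') ∘ₗ f) :
    cocycles act →ₗ[R] cocycles act' :=
  (LinearMap.compLeft f G).restrict (p := cocycles act) (q := cocycles act') (by
    intro c hc g h
    have h2 : f ((act g) (c h)) = (act' g) (f (c h)) := by
      have := congrArg (fun φ : M →ₗ[R] M' => φ (c h)) (hf g)
      simpa using this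
    simp only [LinearMap.compLeft_apply, Function.comp_apply, hc g h, map_add, h2])

/-- Functoriality of `H¹` along an equivariant map. -/
def H1map {M M' : Type*} [AddCommGroup M] [Module R M] [AddCommGroup M'] [Module R M']
    (act : G → Module.End R M) (act' : G → Module.End R M') (f : M →ₗ[R] M')
    (hf : ∀ g : G, f ∘ₗ (act g : M →ₗ[R] M) = (act' g : M' →ₗ[R] M') ∘ₗ f) :
    H1 act →ₗ[R] H1 act' :=
  Submodule.mapQ _ _ (cocyclesMap act act' f hf) (by
    rintro ⟨c, hc⟩ ⟨x, hx⟩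
    refine ⟨f x, ?_⟩
    funext g
    show (act' g) (f x) - f x = f (c g)
    have hxg : (act g) x - x = c g := congrFun hx g
    have h2 : f ((act g) x) = (act' g) (f x) := by
      have := congrArg (fun φ : M →ₗ[R] M' => φ x) (hf g)
      simpa using this
    rw [← hxg, map_sub, h2])

/-- The submodule `a•M` of all multiples of `a` in `M`. -/
def smulTop (a : R) (M : Type*) [AddCommGroup M] [Module R M] : Submodule R M :=
  LinearMap.range (a • (LinearMap.id : M →ₗ[R] M))

theorem smulTop_le_comap (a : R) {M : Type*} [AddCommGroup M] [Module R M] (f : M →ₗ[R] M) :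
    smulTop a M ≤ (smulTop a M).comap f := by
  rintro x ⟨y, rfl⟩
  exact ⟨f y, by simp⟩

/-- The endomorphism of `M/aM` induced by an endomorphism of `M`. -/
def quotEnd (a : R) {M : Type*} [AddCommGroup M] [Module R M] (f : M →ₗ[R] M) :
    Module.End R (M ⧸ smulTop a M) :=
  Submodule.mapQ _ _ f (smulTop_le_comap a f)

/-- The reduction map `H¹(G, M) → H¹(G, M/aM)` induced by the projection `M → M/aM`. -/
def H1red (a : R) {M : Type*} [AddCommGroup M] [Module R M] (act : G → Module.End R M) :
    H1 act →ₗ[R] H1 (fun g : G => quotEnd a (act g)) :=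
  H1map act (fun g : G => quotEnd a (act g)) (smulTop a M).mkQ (fun g =>
    (Submodule.mapQ_mkQ (smulTop a M) (smulTop a M) (act g)).symm)

end GroupCohomologyOne

/-!
A class in `H¹(G, M)` dying in `H¹(G, M/aM)` is represented by `∂x + a • t`, and if `a` is regular
on `M` then `t` is itself a cocycle; so the kernel of reduction is `a • H¹(G, M)`, and it meets a
saturated submodule `N` in `a • N`. A surjection `N → Rʳ` then splits the problem into coordinates:
lifts of the standard basis stay independent modulo `a`.
-/

section CohomologyReduction

variable {R : Type*} [CommRing R] {G : Type*} [Group G] {M : Type*} [AddCommGroup M] [Module R M]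

theorem dZero_mem_cocycles (ρ : G →* Module.End R M) (x : M) :
    dZero (fun g => ρ g) x ∈ cocycles (fun g => ρ g) := by
  intro g h
  change ρ (g * h) x - x = ρ g x - x + ρ g (ρ h x - x)
  rw [map_mul, Module.End.mul_apply, map_sub]
  abel

theorem mem_cocycles_of_smul_mem {a : R} (ha : IsSMulRegular M a) {act : G → Module.End R M}
    {t : G → M} (ht : a • t ∈ cocycles act) : t ∈ cocycles act := by
  intro g h
  apply ha
  simpa only [Pi.smul_apply, map_smul, smul_add] using ht g h

theorem H1red_mk_eq_zero_iff (a : R) (act : G → Module.End R M) (c : cocycles act) :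
    H1red a act (Submodule.Quotient.mk c) = 0 ↔
      ∃ (x : M) (t : G → M), (c : G → M) = dZero act x + a • t := by
  have vanishes_iff : H1red a act (Submodule.Quotient.mk c) = 0 ↔
      ∃ x : M, ∀ g, (smulTop a M).mkQ (act g x - x) = (smulTop a M).mkQ (c.1 g) :=
    (Submodule.Quotient.mk_eq_zero _).trans
      ((smulTop a M).mkQ_surjective.exists.trans (exists_congr fun _ => funext_iff))
  have mkQ_eq_iff (x : M) (g : G) :
      (smulTop a M).mkQ (act g x - x) = (smulTop a M).mkQ (c.1 g) ↔
        ∃ t, c.1 g = act g x - x + a • t := by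
    rw [eq_comm, Submodule.mkQ_apply, Submodule.mkQ_apply, Submodule.Quotient.eq]
    exact exists_congr fun t => eq_comm.trans sub_eq_iff_eq_add'
  simp only [vanishes_iff, mkQ_eq_iff, Classical.skolem, funext_iff]
  rfl

theorem ker_H1red_le_smulTop (ρ : G →* Module.End R M) {a : R} (ha : IsSMulRegular M a) :
    LinearMap.ker (H1red a (fun g => ρ g)) ≤ smulTop a (H1 (fun g => ρ g)) := by
  intro z hz
  obtain ⟨c, rfl⟩ := Submodule.Quotient.mk_surjective _ z
  obtain ⟨x, t, hc⟩ := (H1red_mk_eq_zero_iff a _ c).mp hz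
  have hat : a • t ∈ cocycles (fun g => ρ g) := by
    rw [← sub_eq_of_eq_add' hc]
    exact sub_mem c.2 (dZero_mem_cocycles ρ x)
  refine ⟨Submodule.Quotient.mk ⟨t, mem_cocycles_of_smul_mem ha hat⟩, Eq.symm ?_⟩
  exact (Submodule.Quotient.eq _).mpr ⟨x, eq_sub_of_add_eq hc.symm⟩

end CohomologyReduction

section Rank

variable {R : Type*} [CommRing R] [IsDomain R] [IsPrincipalIdealRing R]
  {N : Type*} [AddCommGroup N] [Module R N] [Module.Finite R N]

theorem exists_surjective_pi_fin_of_le_finrank {r : ℕ} (hr : r ≤ Module.finrank R N) :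
    ∃ g : N →ₗ[R] (Fin r → R), Function.Surjective g := by
  let F := N ⧸ Submodule.torsion R N
  have hF : Module.finrank R F = Module.finrank R N :=
    finrank_quotient_eq_of_le_torsion le_rfl
  let e : F ≃ₗ[R] (Fin (Module.finrank R F) → R) := (Module.finBasis R F).equivFun
  let ι : Fin r → Fin (Module.finrank R F) := Fin.castLE (hr.trans_eq hF.symm)
  refine ⟨LinearMap.funLeft R R ι ∘ₗ e.toLinearMap ∘ₗ (Submodule.torsion R N).mkQ, ?_⟩
  exact (LinearMap.funLeft_surjective_of_injective R R ι (Fin.castLE_injective _)).comp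
    (e.surjective.comp (Submodule.mkQ_surjective _))

theorem exists_forall_dvd_of_sum_smul_eq_smul {r : ℕ} (hr : r ≤ Module.finrank R N) :
    ∃ x : Fin r → N, ∀ (a : R) (c : Fin r → R) (y : N), ∑ i, c i • x i = a • y →
      ∀ i, a ∣ c i := by
  obtain ⟨g, hg⟩ := exists_surjective_pi_fin_of_le_finrank hr
  choose x hx using fun i => hg (Pi.single i 1)
  refine ⟨x, fun a c y h i => ⟨g y i, ?_⟩⟩
  simpa [hx, Pi.single_apply] using congrFun (congrArg g h) i

end Rank

section Extension

variable {R : Type*} [CommRing R] {K : Type*} [Field K] [Algebra R K] [FaithfulSMul R K]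
  {H : Type*} [AddCommGroup H] [Module R H]

theorem finrank_span_mk_one_image_le (N : Submodule R H) [Module.Finite R N] :
    Module.finrank K (Submodule.span K (TensorProduct.mk R K H 1 '' (N : Set H))) ≤
      Module.finrank R N := by
  rw [← Submodule.map_coe, ← Submodule.baseChange_eq_span,
    ← (TensorProduct.isBaseChange R N K).finrank_eq]
  exact LinearMap.finrank_range_le _

theorem smul_mem_comap_mk_one_iff {a : R} (ha : a ≠ 0) (W : Submodule K (K ⊗[R] H)) {y : H} :
    a • y ∈ (W.restrictScalars R).comap (TensorProduct.mk R K H 1) ↔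
      y ∈ (W.restrictScalars R).comap (TensorProduct.mk R K H 1) := by
  have haK : algebraMap R K a ≠ 0 := by
    simpa using ha
  rw [Submodule.mem_comap, map_smul, Submodule.restrictScalars_mem, ← algebraMap_smul K]
  exact W.smul_mem_iff haK

end Extension

theorem statement8_general {R : Type*} [CommRing R] [IsDomain R] [IsPrincipalIdealRing R]
    {G : Type*} [Group G] {M : Type*} [AddCommGroup M] [Module R M] (ρ : G →* Module.End R M)
    {a : R} (ha : IsSMulRegular M a)
    (N : Submodule R (H1 (fun g => ρ g))) [Module.Finite R N] (hN : ∀ y, a • y ∈ N → y ∈ N)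
    {r : ℕ} (hr : r ≤ Module.finrank R N) :
    ∃ f : Fin r → H1 (fun g => quotEnd a (ρ g)),
      (∀ i, f i ∈ N.map (H1red a (fun g => ρ g))) ∧
        ∀ c : Fin r → R, ∑ i, c i • f i = 0 → ∀ i, a ∣ c i := by
  obtain ⟨x, hx⟩ := exists_forall_dvd_of_sum_smul_eq_smul hr
  refine ⟨fun i => H1red a (fun g => ρ g) (x i), fun i => ⟨x i, (x i).2, rfl⟩, fun c hc => ?_⟩
  have hker : ((∑ i, c i • x i : N) : H1 (fun g => ρ g)) ∈
      LinearMap.ker (H1red a fun g => ρ g) := by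
    simpa using hc
  obtain ⟨y, hy : a • y = _⟩ := ker_H1red_le_smulTop ρ ha hker
  have hyN : y ∈ N := hN y (hy ▸ SetLike.coe_mem _)
  exact hx a c ⟨y, hyN⟩ (Subtype.ext hy.symm)

/-- Let `p` be an odd prime, `G` a group, `T` a `G`-module, finite free over
`ℤ_p`, with `H¹(G,T)` finitely generated over `ℤ_p`.  Let `N ⊆ H¹(G,T)` be a saturated
`ℤ_p`-submodule (the preimage of a `ℚ_p`-subspace under `H¹(G,T) → H¹(G,T) ⊗ ℚ_p`) whose image
in `H¹(G,T) ⊗ ℚ_p` has dimension at least `r`.  Then for every `n ≥ 1` the image of `N` under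
`H¹(G,T) → H¹(G,T/pⁿT)` contains a free `ℤ/pⁿ`-submodule of rank `r`. -/
theorem statement8 (p : ℕ) [Fact p.Prime] (hodd : Odd p)
    {G : Type*} [Group G]
    {T : Type*} [AddCommGroup T] [Module ℤ_[p] T]
    [Module.Finite ℤ_[p] T] [Module.Free ℤ_[p] T]
    (ρ : G →* Module.End ℤ_[p] T)
    (hfg : Module.Finite ℤ_[p] (H1 (fun g : G => ρ g)))
    (N : Submodule ℤ_[p] (H1 (fun g : G => ρ g)))
    (hsat : ∃ W : Submodule ℚ_[p] (ℚ_[p] ⊗[ℤ_[p]] H1 (fun g : G => ρ g)),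
      N = Submodule.comap ((TensorProduct.mk ℤ_[p] ℚ_[p] (H1 (fun g : G => ρ g))) 1)
        (W.restrictScalars ℤ_[p]))
    (r : ℕ)
    (hdim : r ≤ Module.finrank ℚ_[p] (Submodule.span ℚ_[p]
      (((TensorProduct.mk ℤ_[p] ℚ_[p] (H1 (fun g : G => ρ g))) 1) '' (N : Set _)))) :
    ∀ n : ℕ, 1 ≤ n →
      ∃ f : Fin r → H1 (fun g : G => quotEnd ((p : ℤ_[p]) ^ n) (ρ g)),
        (∀ i : Fin r, f i ∈ Submodule.map (H1red ((p : ℤ_[p]) ^ n) (fun g : G => ρ g)) N) ∧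
        (∀ c : Fin r → ℤ_[p], (∑ i, c i • f i) = 0 →
          ∀ i : Fin r, ∃ d : ℤ_[p], c i = (p : ℤ_[p]) ^ n * d) := by
  rintro n -
  obtain ⟨W, rfl⟩ := hsat
  have hpn : (p : ℤ_[p]) ^ n ≠ 0 := pow_ne_zero n (NeZero.ne _)
  exact statement8_general ρ (.of_ne_zero hpn) _ (fun _ => (smul_mem_comap_mk_one_iff hpn W).mp)
    (hdim.trans (finrank_span_mk_one_image_le _))
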